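/- arXiv:2509.25212 — 8 statements merged into one kernel-verified Lean document; each statement's English description precedes it below -/
import Mathlib

section
/- Let R be a commutative ring with an algebra-compatible closure cl, and let A, B, C be approximate ideals of R. Suppose A equals the approximate product of B and C, i.e. A = cl(⟨{b*c : b ∈ B, c ∈ C}⟩) where ⟨·⟩ denotes the generated ideal, and suppose A is an approximately prime ideal that is cl-closed (cl A = A). Then B ⊆ A or C ⊆ A. -/
open Pointwise

structure AlgClosure (R : Type*) [Ring R] where
  cl : Set R → Set R
  extensive : ∀ A : Set R, A ⊆ cl A
  mono : ∀ A B : Set R, A ⊆ B → cl A ⊆ cl B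
  idem : ∀ A : Set R, cl (cl A) = cl A
  add_compat : ∀ A B : Set R, cl A + cl B ⊆ cl (A + B)
  smul_left : ∀ (r : R) (A : Set R), r • cl A ⊆ cl (r • A)
  smul_right : ∀ (r : R) (A : Set R), (· * r) '' cl A ⊆ cl ((· * r) '' A)

def IsApproxIdeal {R : Type*} [Ring R] (c : AlgClosure R) (I : Set R) : Prop :=
  (0 : R) ∈ I ∧ (∀ x ∈ I, ∀ y ∈ I, x + y ∈ I) ∧ (∀ x ∈ I, -x ∈ I) ∧
    (∀ (r : R), ∀ x ∈ I, r * x ∈ c.cl I) ∧ (∀ (r : R), ∀ x ∈ I, x * r ∈ c.cl I)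

def IsApproxPrime {R : Type*} [Ring R] (c : AlgClosure R) (P : Set R) : Prop :=
  IsApproxIdeal c P ∧ P ≠ Set.univ ∧ ∀ x y : R, x * y ∈ c.cl P → x ∈ P ∨ y ∈ P

theorem AlgClosure.subset_cl_span {R : Type*} [Ring R] (c : AlgClosure R) (S : Set R) :
    S ⊆ c.cl (Ideal.span S : Set R) :=
  Ideal.subset_span.trans (c.extensive _)

theorem stmt_1_general {R : Type*} [Ring R] {c : AlgClosure R} {P B C : Set R}
    (hprime : IsApproxPrime c P) (hmul : B * C ⊆ c.cl P) : B ⊆ P ∨ C ⊆ P := by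
  obtain ⟨-, -, mem_or_mem⟩ := hprime
  refine or_iff_not_imp_left.mpr fun hB y hy ↦ ?_
  obtain ⟨x, hx, hxP⟩ := Set.not_subset.mp hB
  have hxy : x * y ∈ c.cl P := hmul (Set.mul_mem_mul hx hy)
  exact (mem_or_mem x y hxy).resolve_left hxP

/-- factorization property for cl-closed approximately prime ideals. -/
theorem stmt_1 {R : Type*} [CommRing R] (c : AlgClosure R) (A B C : Set R)
    (hA : IsApproxIdeal c A) (hB : IsApproxIdeal c B) (hC : IsApproxIdeal c C)
    (hprod : A = c.cl (Ideal.span {x : R | ∃ b ∈ B, ∃ cc ∈ C, x = b * cc} : Set R))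
    (hprime : IsApproxPrime c A) (hclosed : c.cl A = A) :
    B ⊆ A ∨ C ⊆ A := by
  refine stmt_1_general hprime (Set.mul_subset_iff.mpr fun b hb d hd ↦ ?_)
  rw [hclosed, hprod]
  exact c.subset_cl_span _ ⟨b, hb, d, hd, rfl⟩
end

section
/- Let f : R → S be a ring homomorphism between rings carrying algebra-compatible closures cl_R and cl_S, and suppose f is Φ-preimage-continuous (f⁻¹(cl_S B) ⊆ cl_R(f⁻¹ B) for all B ⊆ S) and Φ-image-morphic (f(cl_R A) ⊆ cl_S(f(A)) for all A ⊆ R). If J is an approximate ideal of S, then f⁻¹(J) is an approximate ideal of R; and if J is approximately prime, then f⁻¹(J) is approximately prime. -/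
open Pointwise

/-! Preimage-continuity at `J` says `f ⁻¹' (cl J) ⊆ cl (f ⁻¹' J)`, so the absorption property of `J`
pulls back along `f`. Image-morphicity gives the opposite inclusion through the adjunction between
images and preimages. An approximately prime `P` omits `1`, so reading `x ∈ cl P` as `1 * x ∈ cl P`
shows that `P` is closed, whence `f ⁻¹' (cl P) = f ⁻¹' P ⊆ cl (f ⁻¹' P)`. -/

section

variable {R S : Type*} [Ring R] [Ring S] {cR : AlgClosure R} {cS : AlgClosure S}

theorem AlgClosure.cl_preimage_subset_preimage_cl {f : R → S} {B : Set S}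
    (h : f '' cR.cl (f ⁻¹' B) ⊆ cS.cl (f '' (f ⁻¹' B))) :
    cR.cl (f ⁻¹' B) ⊆ f ⁻¹' cS.cl B :=
  Set.image_subset_iff.mp (h.trans (cS.mono _ _ (Set.image_preimage_subset f B)))

theorem IsApproxIdeal.cl_eq_univ_of_one_mem {I : Set R} (hI : IsApproxIdeal cR I)
    (h_one : 1 ∈ I) : cR.cl I = Set.univ := by
  obtain ⟨-, -, -, h_left, -⟩ := hI
  exact Set.eq_univ_of_forall fun x ↦ mul_one x ▸ h_left x 1 h_one

theorem IsApproxPrime.one_notMem {P : Set R} (hP : IsApproxPrime cR P) : 1 ∉ P := by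
  obtain ⟨h_ideal, h_ne_univ, h_prime⟩ := hP
  intro h_one
  have h_cl : cR.cl P = Set.univ := h_ideal.cl_eq_univ_of_one_mem h_one
  refine h_ne_univ (Set.eq_univ_of_forall fun x ↦ or_self_iff.mp (h_prime x x ?_))
  exact h_cl ▸ Set.mem_univ (x * x)

theorem IsApproxPrime.cl_eq {P : Set R} (hP : IsApproxPrime cR P) : cR.cl P = P := by
  refine Set.Subset.antisymm (fun x hx ↦ ?_) (cR.extensive P)
  have h_one_mul : 1 * x ∈ cR.cl P := (one_mul x).symm ▸ hx
  exact (hP.2.2 1 x h_one_mul).resolve_left hP.one_notMem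

theorem IsApproxIdeal.preimage {f : R →+* S} {J : Set S} (hJ : IsApproxIdeal cS J)
    (h : f ⁻¹' cS.cl J ⊆ cR.cl (f ⁻¹' J)) : IsApproxIdeal cR (f ⁻¹' J) := by
  obtain ⟨h_zero, h_add, h_neg, h_left, h_right⟩ := hJ
  refine ⟨?_, fun x hx y hy ↦ ?_, fun x hx ↦ ?_, fun r x hx ↦ h ?_, fun r x hx ↦ h ?_⟩
  · simpa using h_zero
  · simpa using h_add _ hx _ hy
  · simpa using h_neg _ hx
  · simpa using h_left (f r) _ hx
  · simpa using h_right (f r) _ hx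

theorem IsApproxPrime.preimage {f : R →+* S} {P : Set S} (hP : IsApproxPrime cS P)
    (h : cR.cl (f ⁻¹' P) ⊆ f ⁻¹' cS.cl P) : IsApproxPrime cR (f ⁻¹' P) := by
  have h_ideal : IsApproxIdeal cR (f ⁻¹' P) := by
    refine hP.1.preimage ?_
    rw [hP.cl_eq]
    exact cR.extensive _
  have h_one : (1 : R) ∉ f ⁻¹' P := by simpa using hP.one_notMem
  refine ⟨h_ideal, (Set.ne_univ_iff_exists_notMem _).mpr ⟨1, h_one⟩, fun x y hxy ↦ ?_⟩
  have h_mul : f x * f y ∈ cS.cl P := map_mul f x y ▸ h hxy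
  exact hP.2.2 (f x) (f y) h_mul

end

/-- preimages under Φ-continuous, Φ-image-morphic homomorphisms
preserve approximate ideals and approximate primeness. -/
theorem stmt_4 {R S : Type*} [Ring R] [Ring S]
    (cR : AlgClosure R) (cS : AlgClosure S) (f : R →+* S)
    (hpre : ∀ B : Set S, f ⁻¹' (cS.cl B) ⊆ cR.cl (f ⁻¹' B))
    (him : ∀ A : Set R, f '' (cR.cl A) ⊆ cS.cl (f '' A))
    (J : Set S) (hJ : IsApproxIdeal cS J) :
    IsApproxIdeal cR (f ⁻¹' J) ∧
      (IsApproxPrime cS J → IsApproxPrime cR (f ⁻¹' J)) :=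
  ⟨hJ.preimage (hpre J), fun hP ↦
    hP.preimage (AlgClosure.cl_preimage_subset_preimage_cl (him (f ⁻¹' J)))⟩
end

section
/- Let f : R → S be a surjective ring homomorphism between rings carrying algebra-compatible closures cl_R and cl_S, and suppose f is Φ-image-morphic (f(cl_R A) ⊆ cl_S(f(A)) for all A ⊆ R). If I is an approximate ideal of R, then f(I) is an approximate ideal of S. If, in addition, f is Φ-preimage-continuous (f⁻¹(cl_S B) ⊆ cl_R(f⁻¹ B) for all B ⊆ S), I is approximately prime, and Ker f ⊆ I, then f(I) is approximately prime. -/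
open Pointwise

/-!
An approximate ideal `I` containing `Ker f` is saturated, `f⁻¹(f(I)) = I`, so approximate primeness
of `f(I)` reduces to that of its preimage: if `f x * f y ∈ cl f(I)`, then preimage-continuity puts
`x * y` in `cl f⁻¹(f(I)) = cl I`.
-/

section Image

variable {R S : Type*} [Ring R] [Ring S] {cR : AlgClosure R} {cS : AlgClosure S} {f : R →+* S}
  {I : Set R} {J : Set S}

/-- The additive subgroup of `R` underlying an approximate ideal, for using the `AddSubgroup` API
on the bare sets of `IsApproxIdeal`. -/
def IsApproxIdeal.toAddSubgroup (hI : IsApproxIdeal cR I) : AddSubgroup R where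
  carrier := I
  zero_mem' := hI.1
  add_mem' hx hy := hI.2.1 _ hx _ hy
  neg_mem' hx := hI.2.2.1 _ hx

theorem IsApproxIdeal.mul_mem_cl_left (hI : IsApproxIdeal cR I) (r : R) {x : R} (hx : x ∈ I) :
    r * x ∈ cR.cl I :=
  hI.2.2.2.1 r x hx

theorem IsApproxIdeal.mul_mem_cl_right (hI : IsApproxIdeal cR I) (r : R) {x : R} (hx : x ∈ I) :
    x * r ∈ cR.cl I :=
  hI.2.2.2.2 r x hx

theorem IsApproxIdeal.image (hI : IsApproxIdeal cR I) (hf : Function.Surjective f)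
    (hcl : f '' cR.cl I ⊆ cS.cl (f '' I)) : IsApproxIdeal cS (f '' I) := by
  let fI : AddSubgroup S := hI.toAddSubgroup.map (f : R →+ S)
  refine ⟨fI.zero_mem, fun _ hs _ ht ↦ fI.add_mem hs ht, fun _ hs ↦ fI.neg_mem hs, ?_, ?_⟩
  · rintro s _ ⟨x, hx, rfl⟩
    obtain ⟨r, rfl⟩ := hf s
    exact hcl ⟨r * x, hI.mul_mem_cl_left r hx, map_mul f r x⟩
  · rintro s _ ⟨x, hx, rfl⟩
    obtain ⟨r, rfl⟩ := hf s
    exact hcl ⟨x * r, hI.mul_mem_cl_right r hx, map_mul f x r⟩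

theorem IsApproxIdeal.preimage_image_eq (hI : IsApproxIdeal cR I) (hker : {x | f x = 0} ⊆ I) :
    f ⁻¹' (f '' I) = I :=
  congrArg SetLike.coe (AddSubgroup.comap_map_eq_self (f := (f : R →+ S))
    (H := hI.toAddSubgroup) hker)

theorem IsApproxPrime.of_preimage (hP : IsApproxPrime cR (f ⁻¹' J)) (hJ : IsApproxIdeal cS J)
    (hf : Function.Surjective f) (hcl : f ⁻¹' cS.cl J ⊆ cR.cl (f ⁻¹' J)) :
    IsApproxPrime cS J := by
  obtain ⟨-, hproper, hprime⟩ := hP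
  refine ⟨hJ, ?_, ?_⟩
  · rintro rfl
    exact hproper Set.preimage_univ
  · intro s t hst
    obtain ⟨x, rfl⟩ := hf s
    obtain ⟨y, rfl⟩ := hf t
    rw [← map_mul] at hst
    exact hprime x y (hcl hst)

end Image

/-- images of approximate ideals under surjections; primeness is
preserved when moreover `f` is Φ-preimage-continuous and `Ker f ⊆ I`. -/
theorem stmt_6 {R S : Type*} [Ring R] [Ring S]
    (cR : AlgClosure R) (cS : AlgClosure S) (f : R →+* S)
    (hsurj : Function.Surjective f)
    (him : ∀ A : Set R, f '' (cR.cl A) ⊆ cS.cl (f '' A))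
    (I : Set R) (hI : IsApproxIdeal cR I) :
    IsApproxIdeal cS (f '' I) ∧
      ((∀ B : Set S, f ⁻¹' (cS.cl B) ⊆ cR.cl (f ⁻¹' B)) →
        IsApproxPrime cR I → {x : R | f x = 0} ⊆ I →
        IsApproxPrime cS (f '' I)) := by
  have himage : IsApproxIdeal cS (f '' I) := hI.image hsurj (him I)
  refine ⟨himage, fun hpre hprime hker ↦ ?_⟩
  have hpreimage : IsApproxPrime cR (f ⁻¹' (f '' I)) := by
    rwa [hI.preimage_image_eq hker]
  exact hpreimage.of_preimage himage hsurj (hpre (f '' I))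
end

section
/- Let R be a ring, let M and M' be left R-modules carrying R-compatible module closures cl_M and cl_{M'}, and let f : M → M' be an approximate R-homomorphism that is Φ-image-morphic (f(cl_M X) ⊆ cl_{M'}(f(X)) for all X ⊆ M). Then Ker f := {x ∈ M : f(x) ∈ cl_{M'} {0}} is an additive subgroup of M, and R • Ker f ⊆ cl_M(Ker f); that is, Ker f is an approximate submodule of M. -/
/-!
By (CM4) the closure of a submodule is again a submodule, and an approximate homomorphism moves
sums and scalar multiples only within closures of points. Since the closure is idempotent, the
preimage of a closed submodule is therefore a submodule; the kernel is the preimage of the closure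
of the zero submodule.
-/

open Pointwise

/-- An `R`-compatible module closure on a left `R`-module `M` (axioms CM1–CM4). -/
structure ModClosure (R M : Type*) [Ring R] [AddCommGroup M] [Module R M] where
  cl : Set M → Set M
  extensive : ∀ X : Set M, X ⊆ cl X
  mono : ∀ X Y : Set M, X ⊆ Y → cl X ⊆ cl Y
  idem : ∀ X : Set M, cl (cl X) = cl X
  add_compat : ∀ X Y : Set M, cl X + cl Y ⊆ cl (X + Y)
  smul_compat : ∀ (r : R) (X : Set M), r • cl X ⊆ cl (r • X)

/-- Approximate `R`-homomorphism between modules with closures. -/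
def IsApproxHom {R M M' : Type*} [Ring R] [AddCommGroup M] [Module R M]
    [AddCommGroup M'] [Module R M'] (cM' : ModClosure R M') (f : M → M') : Prop :=
  (∀ x y : M, f (x + y) ∈ cM'.cl {f x + f y}) ∧
    (∀ (r : R) (x : M), f (r • x) ∈ cM'.cl {r • f x})

section

variable {R M M' : Type*} [Ring R] [AddCommGroup M] [Module R M] [AddCommGroup M'] [Module R M']

namespace ModClosure

theorem cl_subset_cl_of_subset_cl (c : ModClosure R M) {X Y : Set M} (h : X ⊆ c.cl Y) :
    c.cl X ⊆ c.cl Y :=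
  (c.mono X (c.cl Y) h).trans_eq (c.idem Y)

theorem cl_singleton_subset_of_mem (c : ModClosure R M) {x : M} {Y : Set M} (hx : x ∈ c.cl Y) :
    c.cl {x} ⊆ c.cl Y :=
  c.cl_subset_cl_of_subset_cl (Set.singleton_subset_iff.2 hx)

/-- The closure of a submodule, as a submodule. -/
def submoduleClosure (c : ModClosure R M) (N : Submodule R M) : Submodule R M where
  carrier := c.cl N
  zero_mem' := c.extensive N N.zero_mem
  add_mem' hx hy :=
    c.mono _ _ (Set.add_subset_iff.2 fun _ ha _ hb => N.add_mem ha hb)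
      (c.add_compat N N (Set.add_mem_add hx hy))
  smul_mem' r _ hx :=
    c.mono _ _ (Set.smul_set_subset_iff.2 fun _ ha => N.smul_mem r ha)
      (c.smul_compat r N (Set.smul_mem_smul_set hx))

end ModClosure

namespace IsApproxHom

variable {c : ModClosure R M'} {f : M → M'}

theorem map_zero_mem_cl (hf : IsApproxHom c f) : f 0 ∈ c.cl {0} := by
  simpa only [zero_smul] using hf.2 0 0

/-- The preimage of the closure of a submodule under an approximate homomorphism, as a
submodule. -/
def comapClosure (hf : IsApproxHom c f) (N : Submodule R M') : Submodule R M where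
  carrier := f ⁻¹' c.cl N
  zero_mem' :=
    c.cl_singleton_subset_of_mem (c.submoduleClosure N).zero_mem hf.map_zero_mem_cl
  add_mem' {x y} hx hy :=
    c.cl_singleton_subset_of_mem ((c.submoduleClosure N).add_mem hx hy) (hf.1 x y)
  smul_mem' r x hx :=
    c.cl_singleton_subset_of_mem ((c.submoduleClosure N).smul_mem r hx) (hf.2 r x)

/-- The kernel of an approximate homomorphism: the elements sent into the closure of zero. -/
def ker (hf : IsApproxHom c f) : Submodule R M :=
  hf.comapClosure ⊥

theorem coe_ker (hf : IsApproxHom c f) : (hf.ker : Set M) = {x | f x ∈ c.cl {0}} :=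
  rfl

end IsApproxHom

theorem stmt_7_general (c : ModClosure R M') (f : M → M') (hf : IsApproxHom c f) :
    ∃ K : Submodule R M, (K : Set M) = {x | f x ∈ c.cl {0}} :=
  ⟨hf.ker, hf.coe_ker⟩

end

/-- the kernel of a Φ-image-morphic approximate homomorphism is an
approximate submodule. -/
theorem stmt_7 {R M M' : Type*} [Ring R] [AddCommGroup M] [Module R M]
    [AddCommGroup M'] [Module R M']
    (cM : ModClosure R M) (cM' : ModClosure R M') (f : M → M')
    (hf : IsApproxHom cM' f)
    (him : ∀ X : Set M, f '' cM.cl X ⊆ cM'.cl (f '' X)) :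
    (0 : M) ∈ {x : M | f x ∈ cM'.cl {0}} ∧
      (∀ x ∈ {x : M | f x ∈ cM'.cl {0}}, ∀ y ∈ {x : M | f x ∈ cM'.cl {0}},
        x + y ∈ {x : M | f x ∈ cM'.cl {0}}) ∧
      (∀ x ∈ {x : M | f x ∈ cM'.cl {0}}, -x ∈ {x : M | f x ∈ cM'.cl {0}}) ∧
      (∀ (r : R), ∀ x ∈ {x : M | f x ∈ cM'.cl {0}},
        r • x ∈ cM.cl {x : M | f x ∈ cM'.cl {0}}) := by
  obtain ⟨K, hK⟩ := stmt_7_general cM' f hf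
  rw [← hK]
  exact ⟨K.zero_mem, fun _ hx _ hy => K.add_mem hx hy, fun _ hx => K.neg_mem hx,
    fun r _ hx => cM.extensive K (K.smul_mem r hx)⟩
end

section
/- Let R be a commutative ring with unity equipped with an algebra-compatible closure cl. For ideals I, J of R, define the approximate product IJ := cl(⟨{a*b : a ∈ I, b ∈ J}⟩), where ⟨·⟩ denotes the generated ideal. Then V_Φ(I) ∪ V_Φ(J) = V_Φ(IJ); that is, for every approximately prime ideal P of R, cl(IJ) ⊆ cl P holds if and only if cl I ⊆ cl P or cl J ⊆ cl P. -/
open Pointwise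

/-- The closure operator on the lattice of subsets of `R` underlying an algebra-compatible closure,
which makes Mathlib's API for closure operators available. -/
def AlgClosure.toClosureOperator {R : Type*} [Ring R] (c : AlgClosure R) :
    ClosureOperator (Set R) :=
  .mk' c.cl c.mono c.extensive fun A => (c.idem A).le

theorem subset_or_subset_of_mul_subset {M : Type*} [Mul M] {A B P Q : Set M}
    (hPQ : ∀ x y, x * y ∈ Q → x ∈ P ∨ y ∈ P) (hAB : A * B ⊆ Q) : A ⊆ P ∨ B ⊆ P := by
  refine or_iff_not_imp_left.mpr fun hA b hb => ?_
  obtain ⟨a, ha, haP⟩ := Set.not_subset.mp hA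
  exact (hPQ a b (hAB (Set.mul_mem_mul ha hb))).resolve_left haP

section Semiring

variable {R : Type*} [Semiring R]

theorem ideal_span_setOf_mul_eq_mul (I J : Ideal R) :
    Ideal.span {x : R | ∃ a ∈ I, ∃ b ∈ J, x = a * b} = I * J := by
  apply le_antisymm
  · rw [Ideal.span_le]
    rintro _ ⟨a, ha, b, hb, rfl⟩
    exact Ideal.mul_mem_mul ha hb
  · exact Ideal.mul_le.mpr fun a ha b hb => Ideal.subset_span ⟨a, ha, b, hb, rfl⟩

theorem stmt_9_general (c : ClosureOperator (Set R)) (I J : Ideal R) [I.IsTwoSided] {P : Set R}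
    (hP : ∀ x y, x * y ∈ c P → x ∈ P ∨ y ∈ P) :
    c (I * J : Ideal R) ⊆ c P ↔ c I ⊆ c P ∨ c J ⊆ c P := by
  constructor
  · intro h
    have hIJ : (I : Set R) * (J : Set R) ⊆ c P :=
      Set.mul_subset_iff.mpr fun a ha b hb => h (c.le_closure _ (Ideal.mul_mem_mul ha hb))
    exact (subset_or_subset_of_mul_subset hP hIJ).imp (c.monotone ·) (c.monotone ·)
  · rintro (hI | hJ)
    · exact (c.monotone Ideal.mul_le_left).trans hI
    · exact (c.monotone Ideal.mul_le_right).trans hJ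

end Semiring

/-- `V_Φ(I) ∪ V_Φ(J) = V_Φ(IJ)` for the approximate product
`IJ := cl ⟨{a*b : a ∈ I, b ∈ J}⟩`. -/
theorem stmt_9 {R : Type*} [CommRing R] (c : AlgClosure R) (I J : Ideal R) :
    ∀ P : Set R, IsApproxPrime c P →
      (c.cl (c.cl (Ideal.span {x : R | ∃ a ∈ I, ∃ b ∈ J, x = a * b} : Set R)) ⊆ c.cl P ↔
        c.cl (I : Set R) ⊆ c.cl P ∨ c.cl (J : Set R) ⊆ c.cl P) := by
  rintro P ⟨-, -, hprime⟩
  rw [c.idem, ideal_span_setOf_mul_eq_mul]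
  exact stmt_9_general c.toClosureOperator I J hprime
end

section
/- Let R be a commutative ring with unity equipped with an algebra-compatible closure cl, and let P be an approximately prime ideal of R. Then V_Φ(P) = {P} (i.e. the only approximately prime ideal Q with cl P ⊆ cl Q is P itself) if and only if P is maximal with respect to inclusion among approximately prime ideals, i.e. there is no approximately prime ideal Q with P ⊊ Q. Consequently, Spec_Φ(R) is T₁ if and only if every approximately prime ideal is maximal by inclusion in Spec_Φ(R). -/
open Pointwise

/-- The approximate prime spectrum. -/
def SpecPhi {R : Type*} [Ring R] (c : AlgClosure R) : Set (Set R) :=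
  {P : Set R | IsApproxPrime c P}

/-- The closed sets of the approximate Zariski topology. -/
def VPhi {R : Type*} [Ring R] (c : AlgClosure R) (I : Set R) : Set (Set R) :=
  {P ∈ SpecPhi c | c.cl I ⊆ c.cl P}

/-! An approximate prime `P` is closed: it does not contain `1`, so `x = x * 1 ∈ cl P` forces
`x ∈ P`. Hence `V_Φ(I)` consists of the approximate primes containing `I`. -/

section

variable {R : Type*} [Ring R] {c : AlgClosure R}

theorem AlgClosure.cl_subset_cl_iff {A B : Set R} : c.cl A ⊆ c.cl B ↔ A ⊆ c.cl B :=
  ⟨(c.extensive A).trans, fun h => (c.mono _ _ h).trans (c.idem B).subset⟩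

theorem IsApproxIdeal.mem_cl_of_one_mem {I : Set R} (hI : IsApproxIdeal c I) (h_one : (1 : R) ∈ I)
    (x : R) : x ∈ c.cl I := by
  obtain ⟨-, -, -, mul_mem_cl, -⟩ := hI
  simpa only [mul_one] using mul_mem_cl x 1 h_one

namespace IsApproxPrime

theorem one_notMem_s12 {P : Set R} (hP : IsApproxPrime c P) : (1 : R) ∉ P := by
  obtain ⟨hI, ne_univ, mem_or_mem⟩ := hP
  intro h_one
  exact ne_univ <| Set.eq_univ_of_forall fun x =>
    or_self_iff.mp (mem_or_mem x x (hI.mem_cl_of_one_mem h_one (x * x)))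

theorem cl_eq_s12 {P : Set R} (hP : IsApproxPrime c P) : c.cl P = P := by
  refine Set.Subset.antisymm (fun x hx => ?_) (c.extensive P)
  have hx_one : x * 1 ∈ c.cl P := by rwa [mul_one]
  exact (hP.2.2 x 1 hx_one).resolve_right hP.one_notMem_s12

end IsApproxPrime

theorem mem_VPhi_iff {I Q : Set R} : Q ∈ VPhi c I ↔ IsApproxPrime c Q ∧ I ⊆ Q :=
  and_congr_right fun hQ : IsApproxPrime c Q => by rw [AlgClosure.cl_subset_cl_iff, hQ.cl_eq_s12]

theorem VPhi_eq_singleton_iff_maximal {P : Set R} :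
    VPhi c P = {P} ↔ Maximal (IsApproxPrime c) P := by
  simp only [Set.eq_singleton_iff_unique_mem, mem_VPhi_iff, Set.Subset.rfl, and_true, and_imp,
    maximal_iff, eq_comm]

end

theorem stmt_12_general {R : Type*} [Ring R] (c : AlgClosure R) :
    (∀ P : Set R, IsApproxPrime c P →
      (VPhi c P = {P} ↔ ¬ ∃ Q : Set R, IsApproxPrime c Q ∧ P ⊂ Q)) ∧
    ((∀ P : Set R, IsApproxPrime c P → VPhi c P = {P}) ↔
      ∀ P : Set R, IsApproxPrime c P → ¬ ∃ Q : Set R, IsApproxPrime c Q ∧ P ⊂ Q) := by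
  have singleton_iff (P : Set R) (hP : IsApproxPrime c P) :
      VPhi c P = {P} ↔ ¬ ∃ Q : Set R, IsApproxPrime c Q ∧ P ⊂ Q := by
    simp only [VPhi_eq_singleton_iff_maximal, maximal_iff_forall_gt, hP, true_and, not_exists,
      not_and']
  exact ⟨singleton_iff, forall₂_congr singleton_iff⟩

/-- the T₁-criterion: `V_Φ(P) = {P}` iff `P` is maximal by
inclusion among approximate primes; consequently all singletons of
`Spec_Φ(R)` are closed iff every approximate prime is maximal by inclusion. -/
theorem stmt_12 {R : Type*} [CommRing R] (c : AlgClosure R) :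
    (∀ P : Set R, IsApproxPrime c P →
      (VPhi c P = {P} ↔ ¬ ∃ Q : Set R, IsApproxPrime c Q ∧ P ⊂ Q)) ∧
    ((∀ P : Set R, IsApproxPrime c P → VPhi c P = {P}) ↔
      ∀ P : Set R, IsApproxPrime c P → ¬ ∃ Q : Set R, IsApproxPrime c Q ∧ P ⊂ Q) :=
  stmt_12_general c
end

section
/- Let R be a commutative ring with unity equipped with an algebra-compatible closure cl, and suppose R satisfies the ascending chain condition on cl-closed ideals (every ascending chain of ideals J of R with cl J = J stabilizes). Then Spec_Φ(R) is quasi-compact: for every family (f_i)_{i ∈ Λ} of elements of R such that ⋂_{i ∈ Λ} V_Φ(⟨f_i⟩) = ∅, there exists a finite subset F ⊆ Λ with ⋂_{i ∈ F} V_Φ(⟨f_i⟩) = ∅; equivalently, every cover of Spec_Φ(R) by basic open sets D_Φ(f_i) := Spec_Φ(R) \ V_Φ(⟨f_i⟩) admits a finite subcover. -/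
open Pointwise

/-!
A finite subfamily cuts out the same locus in `Spec_Φ(R)` as the whole family as soon as both
generate the same ideal up to closure, because the closure of an approximate prime is itself a
closed two-sided ideal. Under the chain condition every element of the lattice of closed ideals is
compact, so the closed ideal generated by a family is already generated by a finite subfamily.
-/

theorem exists_finset_closure_biSup_eq {α ι : Type*} [CompleteLattice α] (c : ClosureOperator α)
    [WellFoundedGT c.Closeds] (a : ι → α) :
    ∃ F : Finset ι, c (⨆ i ∈ F, a i) = c (⨆ i, a i) := by
  let : CompleteLattice c.Closeds := c.gi.liftCompleteLattice
  have hcompact : IsCompactElement (c.toCloseds (⨆ i, a i)) :=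
    (CompleteLattice.isSupFiniteCompact_iff_all_elements_compact c.Closeds).1
      (CompleteLattice.WellFoundedGT.isSupFiniteCompact c.Closeds) _
  obtain ⟨F, hF⟩ := CompleteLattice.IsCompactElement.exists_finset_of_le_iSup _ hcompact
    (fun i ↦ c.toCloseds (a i)) c.gi.gc.l_iSup.le
  have hle : c (⨆ i, a i) ≤ c (⨆ i ∈ F, a i) := by
    rwa [← c.gi.gc.l_iSup₂] at hF
  exact ⟨F, (c.monotone (iSup₂_le_iSup _ a)).antisymm hle⟩

section Ring

variable {R : Type*} [Ring R] {c : AlgClosure R}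

namespace IsApproxIdeal

variable {I : Set R}

theorem add_mem_cl (hI : IsApproxIdeal c I) {x y : R} (hx : x ∈ c.cl I) (hy : y ∈ c.cl I) :
    x + y ∈ c.cl I := by
  obtain ⟨-, hadd, -⟩ := hI
  exact c.mono _ _ (Set.add_subset_iff.2 hadd) (c.add_compat I I (Set.add_mem_add hx hy))

theorem mul_mem_cl_left_s13 (hI : IsApproxIdeal c I) (r : R) {x : R} (hx : x ∈ c.cl I) :
    r * x ∈ c.cl I := by
  obtain ⟨-, -, -, hleft, -⟩ := hI
  exact AlgClosure.cl_subset_cl_iff.2 (Set.image_subset_iff.2 (hleft r))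
    (c.smul_left r I (Set.smul_mem_smul_set hx))

theorem mul_mem_cl_right_s13 (hI : IsApproxIdeal c I) (r : R) {x : R} (hx : x ∈ c.cl I) :
    x * r ∈ c.cl I := by
  obtain ⟨-, -, -, -, hright⟩ := hI
  exact AlgClosure.cl_subset_cl_iff.2 (Set.image_subset_iff.2 (hright r))
    (c.smul_right r I (Set.mem_image_of_mem _ hx))

/-- The closure `cl I` of an approximate ideal `I`, as a genuine two-sided ideal. -/
def closure (hI : IsApproxIdeal c I) : TwoSidedIdeal R :=
  .mk' (c.cl I) (c.extensive I hI.1) hI.add_mem_cl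
    (fun {x} hx ↦ neg_one_mul x ▸ hI.mul_mem_cl_left_s13 (-1) hx)
    (hI.mul_mem_cl_left_s13 _) (hI.mul_mem_cl_right_s13 _)

@[simp]
theorem coe_closure (hI : IsApproxIdeal c I) : (hI.closure : Set R) = c.cl I :=
  TwoSidedIdeal.coe_mk' ..

end IsApproxIdeal

theorem isApproxIdeal_coe_twoSidedIdeal (c : AlgClosure R) (I : TwoSidedIdeal R) :
    IsApproxIdeal c (I : Set R) :=
  ⟨I.zero_mem, fun _ hx _ hy ↦ I.add_mem hx hy, fun _ hx ↦ I.neg_mem hx,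
    fun r x hx ↦ c.extensive _ (I.mul_mem_left r x hx),
    fun r x hx ↦ c.extensive _ (I.mul_mem_right x r hx)⟩

/-- The closure operator on the lattice of two-sided ideals obtained by restricting `c.cl`. -/
def AlgClosure.idealClosure (c : AlgClosure R) : ClosureOperator (TwoSidedIdeal R) :=
  .mk₂ (fun I ↦ (isApproxIdeal_coe_twoSidedIdeal c I).closure)
    (fun I ↦ by simpa only [TwoSidedIdeal.le_iff, IsApproxIdeal.coe_closure] using c.extensive I)
    (fun I J h ↦ by
      simpa only [TwoSidedIdeal.le_iff, IsApproxIdeal.coe_closure, cl_subset_cl_iff] using h)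

@[simp]
theorem AlgClosure.coe_idealClosure (c : AlgClosure R) (I : TwoSidedIdeal R) :
    (c.idealClosure I : Set R) = c.cl I :=
  (isApproxIdeal_coe_twoSidedIdeal c I).coe_closure

theorem AlgClosure.isClosed_idealClosure_iff {I : TwoSidedIdeal R} :
    c.idealClosure.IsClosed I ↔ c.cl (I : Set R) = I := by
  rw [← coe_idealClosure, SetLike.coe_set_eq]
  exact c.idealClosure.isClosed_iff

theorem IsApproxIdeal.isClosed_closure {I : Set R} (hI : IsApproxIdeal c I) :
    c.idealClosure.IsClosed hI.closure := by
  rw [AlgClosure.isClosed_idealClosure_iff, hI.coe_closure, c.idem]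

theorem AlgClosure.wellFoundedGT_closeds_of_chain_condition
    (hacc : ∀ J : ℕ → Ideal R, (∀ n, c.cl (J n : Set R) = J n) → (∀ n, J n ≤ J (n + 1)) →
      ∃ N, ∀ n ≥ N, J n = J N) :
    WellFoundedGT c.idealClosure.Closeds := by
  rw [wellFoundedGT_iff_monotone_chain_condition]
  intro a
  obtain ⟨N, hN⟩ := hacc (fun n ↦ (a n).1.asIdeal)
    (fun n ↦ isClosed_idealClosure_iff.1 (a n).2)
    (fun n ↦ TwoSidedIdeal.asIdeal.monotone (a.monotone n.le_succ))
  refine ⟨N, fun n hn ↦ Subtype.ext (SetLike.coe_injective ?_)⟩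
  simpa only [TwoSidedIdeal.coe_asIdeal] using congrArg (SetLike.coe (B := R)) (hN n hn).symm

theorem mem_VPhi_iff_span_le {P A : Set R} (hP : P ∈ SpecPhi c) :
    P ∈ VPhi c A ↔ TwoSidedIdeal.span A ≤ hP.1.closure := by
  rw [TwoSidedIdeal.span_le, IsApproxIdeal.coe_closure, ← AlgClosure.cl_subset_cl_iff]
  exact and_iff_right hP

theorem stmt_13_general (c : AlgClosure R) [WellFoundedGT c.idealClosure.Closeds] {ι : Type*}
    (A : ι → Set R) :
    ∃ F : Finset ι, SpecPhi c ∩ (⋂ i ∈ F, VPhi c (A i)) = SpecPhi c ∩ (⋂ i, VPhi c (A i)) := by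
  obtain ⟨F, hF⟩ :=
    exists_finset_closure_biSup_eq c.idealClosure fun i ↦ TwoSidedIdeal.span (A i)
  refine ⟨F, Set.ext fun P ↦ and_congr_right fun hP ↦ ?_⟩
  simp only [Set.mem_iInter, mem_VPhi_iff_span_le hP, ← iSup_le_iff]
  rw [← hP.1.isClosed_closure.closure_le_iff, hF, hP.1.isClosed_closure.closure_le_iff]

end Ring

/-- quasi-compactness of `Spec_Φ(R)` under the ascending chain
condition on `cl`-closed ideals: if the basic open sets `D_Φ(f i)` cover
`Spec_Φ(R)` (equivalently, the `V_Φ(⟨f i⟩)` have empty intersection inside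
`Spec_Φ(R)`), then finitely many already do. -/
theorem stmt_13 {R : Type*} [CommRing R] (c : AlgClosure R)
    (hacc : ∀ J : ℕ → Ideal R, (∀ n, c.cl ((J n : Ideal R) : Set R) = ((J n : Ideal R) : Set R)) →
      (∀ n, J n ≤ J (n + 1)) → ∃ N, ∀ n ≥ N, J n = J N) :
    ∀ {ι : Type*} (f : ι → R),
      SpecPhi c ∩ (⋂ i : ι, VPhi c ((Ideal.span {f i} : Ideal R) : Set R)) = ∅ →
      ∃ F : Finset ι,
        SpecPhi c ∩ (⋂ i ∈ F, VPhi c ((Ideal.span {f i} : Ideal R) : Set R)) = ∅ := by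
  intro ι f hf
  have := AlgClosure.wellFoundedGT_closeds_of_chain_condition hacc
  exact (stmt_13_general c fun i ↦ (Ideal.span {f i} : Set R)).imp fun _ hF ↦ hF.trans hf
end

section
/- Fix an integer m ≥ 2 and equip ℤ with the modular closure cl(A) := ⟨A⟩ + mℤ. Then the approximately prime ideals of ℤ are exactly the ideals pℤ where p is a prime number dividing m; i.e. Spec_Φ(ℤ) = {pℤ : p prime, p ∣ m}. Moreover, for every n ∈ ℤ, V_Φ(nℤ) = {pℤ : p prime, p ∣ m and p ∣ n}. In particular Spec_Φ(ℤ) is a finite set and the approximate Zariski topology on it is discrete. -/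
/-- The modular closure on `ℤ`: `cl(A) = ⟨A⟩ + mℤ`. -/
def modCl (m : ℤ) (A : Set ℤ) : Set ℤ :=
  ((Ideal.span A + Ideal.span {m} : Ideal ℤ) : Set ℤ)

/-- Approximate ideal of `ℤ` w.r.t. the modular closure. -/
def IsApproxIdealZ (m : ℤ) (I : Set ℤ) : Prop :=
  (0 : ℤ) ∈ I ∧ (∀ x ∈ I, ∀ y ∈ I, x + y ∈ I) ∧ (∀ x ∈ I, -x ∈ I) ∧
    (∀ (r : ℤ), ∀ x ∈ I, r * x ∈ modCl m I)

/-- Approximately prime ideal of `ℤ` w.r.t. the modular closure. -/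
def IsApproxPrimeZ (m : ℤ) (P : Set ℤ) : Prop :=
  IsApproxIdealZ m P ∧ P ≠ Set.univ ∧
    ∀ x y : ℤ, x * y ∈ modCl m P → x ∈ P ∨ y ∈ P

/-- The approximate prime spectrum of `ℤ`. -/
def SpecPhiZ (m : ℤ) : Set (Set ℤ) := {P | IsApproxPrimeZ m P}

/-- Closed sets of the approximate Zariski topology on `Spec_Φ(ℤ)`. -/
def VPhiZ (m : ℤ) (I : Set ℤ) : Set (Set ℤ) :=
  {P ∈ SpecPhiZ m | modCl m I ⊆ modCl m P}

/-!
An approximately prime `P` equals its own closure: if `x ∈ cl P` and `z ∉ P`, then `x * z ∈ cl P`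
because `cl P` is an ideal, so `x ∈ P`. Thus `Spec_Φ(ℤ)` is the set of prime ideals of `ℤ` that
contain `m`, and `V_Φ` is the usual Zariski closed set inside it. Since `m ≠ 0`, these primes are
maximal, so points are closed, and there are finitely many of them because `ℤ/mℤ` is finite.
-/

theorem modCl_subset_coe_iff {m : ℤ} {A : Set ℤ} {I : Ideal ℤ} :
    modCl m A ⊆ I ↔ A ⊆ I ∧ m ∈ I := by
  rw [modCl, SetLike.coe_subset_coe, Submodule.add_eq_sup, sup_le_iff, Ideal.span_le,
    Ideal.span_singleton_le_iff_mem]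

theorem subset_modCl (m : ℤ) (A : Set ℤ) : A ⊆ modCl m A :=
  fun _ hx => Ideal.mem_sup_left (Ideal.subset_span hx)

theorem modCl_coe {m : ℤ} {I : Ideal ℤ} (hm : m ∈ I) : modCl m I = I :=
  (modCl_subset_coe_iff.2 ⟨subset_rfl, hm⟩).antisymm (subset_modCl m I)

theorem IsApproxPrimeZ.modCl_eq {m : ℤ} {P : Set ℤ} (hP : IsApproxPrimeZ m P) :
    modCl m P = P := by
  obtain ⟨-, hne, hprime⟩ := hP
  obtain ⟨z, hz⟩ := (Set.ne_univ_iff_exists_notMem P).1 hne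
  refine Set.Subset.antisymm (fun x hx => ?_) (subset_modCl m P)
  have hxz : x * z ∈ modCl m P := Ideal.mul_mem_right z _ hx
  exact (hprime x z hxz).resolve_right hz

theorem IsApproxPrimeZ.exists_isPrime {m : ℤ} {P : Set ℤ} (hP : IsApproxPrimeZ m P) :
    ∃ I : Ideal ℤ, (I.IsPrime ∧ m ∈ I) ∧ (I : Set ℤ) = P := by
  obtain ⟨I, rfl⟩ : ∃ I : Ideal ℤ, (I : Set ℤ) = P := ⟨_, hP.modCl_eq⟩
  have hm : m ∈ I := (modCl_subset_coe_iff.1 hP.modCl_eq.subset).2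
  obtain ⟨-, hne, hprime⟩ := hP
  rw [modCl_coe hm] at hprime
  exact ⟨I, ⟨⟨fun h => hne (h ▸ Submodule.top_coe), fun h => hprime _ _ h⟩, hm⟩, rfl⟩

theorem isApproxPrimeZ_coe {m : ℤ} {I : Ideal ℤ} (hI : I.IsPrime) (hm : m ∈ I) :
    IsApproxPrimeZ m I := by
  rw [IsApproxPrimeZ, IsApproxIdealZ, modCl_coe hm]
  exact ⟨⟨I.zero_mem, fun _ hx _ hy => I.add_mem hx hy, fun _ hx => I.neg_mem hx,
    fun r _ hx => I.mul_mem_left r hx⟩, fun h => hI.ne_top (SetLike.coe_injective h),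
    fun _ _ h => hI.mem_or_mem h⟩

theorem specPhiZ_eq_image (m : ℤ) :
    SpecPhiZ m = (↑) '' {I : Ideal ℤ | I.IsPrime ∧ m ∈ I} := by
  ext P
  constructor
  · exact IsApproxPrimeZ.exists_isPrime
  · rintro ⟨I, ⟨hI, hm⟩, rfl⟩
    exact isApproxPrimeZ_coe hI hm

theorem vPhiZ_eq_image (m : ℤ) (A : Set ℤ) :
    VPhiZ m A = (↑) '' {I : Ideal ℤ | (I.IsPrime ∧ m ∈ I) ∧ A ⊆ I} := by
  ext P
  rw [VPhiZ, specPhiZ_eq_image]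
  constructor
  · rintro ⟨⟨I, hI, rfl⟩, hA⟩
    rw [modCl_coe hI.2, modCl_subset_coe_iff] at hA
    exact ⟨I, ⟨hI, hA.1⟩, rfl⟩
  · rintro ⟨I, ⟨hI, hA⟩, rfl⟩
    refine ⟨⟨I, hI, rfl⟩, ?_⟩
    rw [modCl_coe hI.2]
    exact modCl_subset_coe_iff.2 ⟨hA, hI.2⟩

theorem isPrime_and_mem_iff_exists_span_prime {m : ℤ} (hm : m ≠ 0) {I : Ideal ℤ} :
    I.IsPrime ∧ m ∈ I ↔ ∃ p : ℕ, p.Prime ∧ (p : ℤ) ∣ m ∧ I = Ideal.span {(p : ℤ)} := by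
  rw [Ideal.isPrime_int_iff]
  constructor
  · rintro ⟨rfl | ⟨p, hp, rfl⟩, hmI⟩
    · exact absurd (Ideal.mem_bot.1 hmI) hm
    · exact ⟨p, hp, Ideal.mem_span_singleton.1 hmI, rfl⟩
  · rintro ⟨p, hp, hpm, rfl⟩
    exact ⟨.inr ⟨p, hp, rfl⟩, Ideal.mem_span_singleton.2 hpm⟩

theorem specPhiZ_eq_span_prime {m : ℤ} (hm : m ≠ 0) :
    SpecPhiZ m = {P : Set ℤ | ∃ p : ℕ, p.Prime ∧ (p : ℤ) ∣ m ∧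
      P = ((Ideal.span {(p : ℤ)} : Ideal ℤ) : Set ℤ)} := by
  ext P
  simp only [specPhiZ_eq_image, isPrime_and_mem_iff_exists_span_prime hm]
  constructor
  · rintro ⟨_, ⟨p, hp, hpm, rfl⟩, rfl⟩
    exact ⟨p, hp, hpm, rfl⟩
  · rintro ⟨p, hp, hpm, rfl⟩
    exact ⟨_, ⟨p, hp, hpm, rfl⟩, rfl⟩

theorem vPhiZ_span_singleton {m : ℤ} (hm : m ≠ 0) (n : ℤ) :
    VPhiZ m ((Ideal.span {n} : Ideal ℤ) : Set ℤ) =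
      {P : Set ℤ | ∃ p : ℕ, p.Prime ∧ (p : ℤ) ∣ m ∧ (p : ℤ) ∣ n ∧
        P = ((Ideal.span {(p : ℤ)} : Ideal ℤ) : Set ℤ)} := by
  ext P
  simp only [vPhiZ_eq_image, isPrime_and_mem_iff_exists_span_prime hm, SetLike.coe_subset_coe]
  constructor
  · rintro ⟨_, ⟨⟨p, hp, hpm, rfl⟩, hn⟩, rfl⟩
    exact ⟨p, hp, hpm, Ideal.span_singleton_le_span_singleton.1 hn, rfl⟩
  · rintro ⟨p, hp, hpm, hpn, rfl⟩
    exact ⟨_, ⟨⟨p, hp, hpm, rfl⟩, Ideal.span_singleton_le_span_singleton.2 hpn⟩, rfl⟩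

theorem specPhiZ_finite {m : ℤ} (hm : m ≠ 0) : (SpecPhiZ m).Finite := by
  rw [specPhiZ_eq_image]
  exact ((Ring.HasFiniteQuotients.finite_setOfPred_mem m hm).subset fun _ hI => hI.2).image _

theorem vPhiZ_coe_eq_singleton {m : ℤ} (hm : m ≠ 0) {I : Ideal ℤ} (hI : I.IsPrime)
    (hmI : m ∈ I) : VPhiZ m I = {(I : Set ℤ)} := by
  have hmax : I.IsMaximal := hI.isMaximal ((Submodule.ne_bot_iff I).2 ⟨m, hmI, hm⟩)
  have hset : {J : Ideal ℤ | (J.IsPrime ∧ m ∈ J) ∧ (I : Set ℤ) ⊆ J} = {I} := by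
    ext J
    constructor
    · rintro ⟨⟨hJ, -⟩, hIJ⟩
      exact (hmax.eq_of_le hJ.ne_top hIJ).symm
    · rintro rfl
      exact ⟨⟨hI, hmI⟩, subset_rfl⟩
  rw [vPhiZ_eq_image, hset, Set.image_singleton]

/-- `Spec_Φ(ℤ)` under the modular closure consists exactly of the
`pℤ` with `p` prime dividing `m`; `V_Φ(nℤ)` consists of those with moreover
`p ∣ n`; the spectrum is finite, and every singleton is closed (so the topology
is discrete). -/
theorem stmt_14 (m : ℤ) (hm : 2 ≤ m) :
    SpecPhiZ m = {P : Set ℤ | ∃ p : ℕ, p.Prime ∧ (p : ℤ) ∣ m ∧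
        P = ((Ideal.span {(p : ℤ)} : Ideal ℤ) : Set ℤ)} ∧
      (∀ n : ℤ, VPhiZ m ((Ideal.span {n} : Ideal ℤ) : Set ℤ) =
        {P : Set ℤ | ∃ p : ℕ, p.Prime ∧ (p : ℤ) ∣ m ∧ (p : ℤ) ∣ n ∧
          P = ((Ideal.span {(p : ℤ)} : Ideal ℤ) : Set ℤ)}) ∧
      (SpecPhiZ m).Finite ∧
      (∀ P ∈ SpecPhiZ m, ∃ I : Ideal ℤ, VPhiZ m ((I : Ideal ℤ) : Set ℤ) = {P}) := by
  have hm0 : m ≠ 0 := by lia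
  refine ⟨specPhiZ_eq_span_prime hm0, vPhiZ_span_singleton hm0, specPhiZ_finite hm0,
    fun P hP => ?_⟩
  obtain ⟨I, ⟨hI, hmI⟩, rfl⟩ := IsApproxPrimeZ.exists_isPrime hP
  exact ⟨I, vPhiZ_coe_eq_singleton hm0 hI hmI⟩
end
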